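/- The proportion of visible lattice points among all nonzero lattice points in the disk of radius Q tends to 6/π²: that is, #{(a, b) ∈ ℤ² \ {(0,0)} : gcd(a, b) = 1, a² + b² ≤ Q²} / #{(a, b) ∈ ℤ² \ {(0,0)} : a² + b² ≤ Q²} → 6/π² as Q → ∞. -/

import Mathlib

/-!
Let `N(R)` be the number of nonzero lattice points in the disk of radius `R` and `V(R)` the
number of visible ones. Since `∑_{d ∣ n} μ(d)` detects `n = 1`, and the points whose gcd is
divisible by `d` are `d` times the nonzero points of the disk of radius `R / d`, one has
`V(R) = ∑_d μ(d) N(R / d)` (`hasSum_visible`).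

Now `N(R) / R ^ 2 → c`, where `c > 0` is the area of the unit disk (`tendsto_card_diskPoints`);
only `c ≠ 0` matters, since `c` cancels in the proportion. As `N(R) ≤ 9 R ^ 2` for every `R ≥ 0`
(`card_diskPoints_le`), the series for `V(R) / R ^ 2` is dominated by `∑ 9 / d ^ 2`, and dominated
convergence gives `V(R) / R ^ 2 → c ∑ μ(d) / d ^ 2 = c / ζ(2)`. Dividing the two limits leaves
`1 / ζ(2) = 6 / π ^ 2` (`tsum_moebius_div_sq`).
-/

open Filter

/-- The nonzero lattice points in the closed disk of radius `R` around the origin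
(of radius `|R|` if `R` is negative). -/
def diskPoints (R : ℝ) : Set (ℤ × ℤ) :=
  {p | p ≠ (0, 0) ∧ (p.1 : ℝ) ^ 2 + (p.2 : ℝ) ^ 2 ≤ R ^ 2}

lemma diskPoints_subset_box {R : ℝ} (hR : 0 ≤ R) :
    diskPoints R ⊆ (Finset.Icc (-⌊R⌋) ⌊R⌋ ×ˢ Finset.Icc (-⌊R⌋) ⌊R⌋ : Finset (ℤ × ℤ)) := by
  rintro ⟨a, b⟩ ⟨-, h⟩
  simp only at h
  have ha := abs_le.1 (abs_le_of_sq_le_sq (a := (a : ℝ)) (by nlinarith [sq_nonneg (b : ℝ)]) hR)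
  have hb := abs_le.1 (abs_le_of_sq_le_sq (a := (b : ℝ)) (by nlinarith [sq_nonneg (a : ℝ)]) hR)
  simp only [Finset.coe_product, Finset.coe_Icc, Set.mem_prod, Set.mem_Icc]
  refine ⟨⟨neg_le.1 (Int.le_floor.2 ?_), Int.le_floor.2 ha.2⟩,
    neg_le.1 (Int.le_floor.2 ?_), Int.le_floor.2 hb.2⟩ <;> push_cast <;> linarith

lemma diskPoints_finite {R : ℝ} (hR : 0 ≤ R) : (diskPoints R).Finite :=
  (Finset.finite_toSet _).subset (diskPoints_subset_box hR)

lemma diskPoints_eq_empty {R : ℝ} (hR : 0 ≤ R) (hR1 : R < 1) : diskPoints R = ∅ := by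
  refine Set.eq_empty_of_forall_notMem fun p hp => hp.1 ?_
  have h := diskPoints_subset_box hR hp
  simpa [Int.floor_eq_zero_iff.2 ⟨hR, hR1⟩, Prod.ext_iff] using h

/-- The uniform quadratic bound that dominates the Möbius sum. It holds for all `R ≥ 0`
because the disk contains no nonzero lattice point when `R < 1`. -/
lemma card_diskPoints_le {R : ℝ} (hR : 0 ≤ R) : (Nat.card (diskPoints R) : ℝ) ≤ 9 * R ^ 2 := by
  rcases lt_or_ge R 1 with h1 | h1
  · rw [diskPoints_eq_empty hR h1]
    simp
    positivity
  · have h := Nat.card_mono (Finset.finite_toSet _) (diskPoints_subset_box hR)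
    simp only [Nat.card_coe_set_eq, Set.ncard_coe_finset, Finset.card_product,
      Int.card_Icc] at h
    rw [← Nat.card_coe_set_eq] at h
    have hf : (0 : ℤ) ≤ ⌊R⌋ := Int.floor_nonneg.2 hR
    have h3 : (((⌊R⌋ + 1 - -⌊R⌋).toNat : ℕ) : ℝ) ≤ 3 * R := by
      have : (((⌊R⌋ + 1 - -⌊R⌋).toNat : ℤ) : ℝ) = ((⌊R⌋ + 1 - -⌊R⌋ : ℤ) : ℝ) := by
        rw [Int.toNat_of_nonneg (by omega)]
      have h4 := Int.floor_le R
      push_cast at this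
      linarith
    calc (Nat.card (diskPoints R) : ℝ)
        ≤ ((⌊R⌋ + 1 - -⌊R⌋).toNat : ℝ) * ((⌊R⌋ + 1 - -⌊R⌋).toNat : ℝ) := by exact_mod_cast h
      _ ≤ (3 * R) * (3 * R) := by gcongr
      _ = 9 * R ^ 2 := by ring

/-- The unit disk in the coordinates `Fin 2 → ℝ`. -/
def unitDisk : Set (Fin 2 → ℝ) := {x | x 0 ^ 2 + x 1 ^ 2 ≤ 1}

lemma convex_unitDisk : Convex ℝ unitDisk := by
  have h : ∀ i : Fin 2, ConvexOn ℝ Set.univ (fun x : Fin 2 → ℝ => x i ^ 2) := fun i =>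
    (even_two.convexOn_pow (𝕜 := ℝ)).comp_linearMap
      (LinearMap.proj (R := ℝ) (φ := fun _ : Fin 2 => ℝ) i)
  simpa [unitDisk] using ((h 0).add (h 1)).convex_le 1

lemma isBounded_unitDisk : Bornology.IsBounded unitDisk := by
  refine (Metric.isBounded_closedBall (x := 0) (r := 1)).subset fun x hx => ?_
  have hx : x 0 ^ 2 + x 1 ^ 2 ≤ 1 := hx
  rw [mem_closedBall_zero_iff, pi_norm_le_iff_of_nonneg zero_le_one, Fin.forall_fin_two]
  simp only [Real.norm_eq_abs]
  constructor <;> refine abs_le_of_sq_le_sq ?_ zero_le_one <;>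
    nlinarith [sq_nonneg (x 0), sq_nonneg (x 1)]

lemma measurableSet_unitDisk : MeasurableSet unitDisk :=
  (isClosed_le (f := fun x : Fin 2 → ℝ => x 0 ^ 2 + x 1 ^ 2) (by fun_prop)
    continuous_const).measurableSet

lemma volume_unitDisk_pos : 0 < MeasureTheory.volume.real unitDisk := by
  refine ENNReal.toReal_pos ?_ isBounded_unitDisk.measure_lt_top.ne
  refine (MeasureTheory.Measure.measure_pos_of_mem_nhds _ (x := 0) ?_).ne'
  refine mem_of_superset (IsOpen.mem_nhds
    (isOpen_lt (f := fun x : Fin 2 → ℝ => x 0 ^ 2 + x 1 ^ 2) (g := fun _ => 1) (by fun_prop)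
    continuous_const) (by simp)) fun x (hx : x 0 ^ 2 + x 1 ^ 2 < 1) => hx.le

open scoped Pointwise in
/-- Scaling by `R⁻¹` turns the lattice points of the disk of radius `R` into the points of the
lattice `R⁻¹ℤ²` in the unit disk; the extra `1` counts the origin. -/
lemma card_unitDisk_inter {R : ℝ} (hR : 0 < R) :
    Nat.card ↑(unitDisk ∩ R⁻¹ • (Submodule.span ℤ (Set.range (Pi.basisFun ℝ (Fin 2))) :
      Set (Fin 2 → ℝ))) = Nat.card (diskPoints R) + 1 := by
  have hins : Nat.card (insert (0, 0) (diskPoints R) : Set (ℤ × ℤ))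
      = Nat.card (diskPoints R) + 1 := by
    simp only [Nat.card_coe_set_eq]
    exact Set.ncard_insert_of_notMem (fun h => h.1 rfl) (diskPoints_finite hR.le)
  rw [← hins]
  let f : ℤ × ℤ → (Fin 2 → ℝ) := fun p => R⁻¹ • ![(p.1 : ℝ), (p.2 : ℝ)]
  have hf : Function.Injective f := by
    intro p q h
    have h' := smul_right_injective (Fin 2 → ℝ) (inv_ne_zero hR.ne') h
    have h0 := congrFun h' 0
    have h1 := congrFun h' 1
    simp at h0 h1
    exact Prod.ext h0 h1
  rw [← Nat.card_image_of_injective hf]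
  have hmem : ∀ p : ℤ × ℤ, f p ∈ unitDisk ↔ p ∈ insert (0, 0) (diskPoints R) := by
    rintro ⟨a, b⟩
    have : f (a, b) ∈ unitDisk ↔ (a : ℝ) ^ 2 + (b : ℝ) ^ 2 ≤ R ^ 2 := by
      simp only [unitDisk, f, Set.mem_ofPred_eq, Pi.smul_apply, Matrix.cons_val_zero,
        Matrix.cons_val_one, smul_eq_mul, mul_pow, ← mul_add, inv_pow]
      rw [inv_mul_le_iff₀ (by positivity), mul_one]
    rw [this, Set.mem_insert_iff, diskPoints, Set.mem_ofPred_eq]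
    by_cases h : (a, b) = ((0, 0) : ℤ × ℤ)
    · simp only [Prod.mk.injEq] at h
      simp [h.1, h.2]
      positivity
    · simp [h]
  congr 2
  ext x
  constructor
  · rintro ⟨hx, y, hy, rfl⟩
    rw [SetLike.mem_coe, Module.Basis.mem_span_iff_repr_mem] at hy
    obtain ⟨a, ha⟩ := hy 0
    obtain ⟨b, hb⟩ := hy 1
    have e : f (a, b) = R⁻¹ • y := by
      simp only [f]
      congr 1
      ext i
      fin_cases i
      · simpa using ha
      · simpa using hb
    exact ⟨(a, b), (hmem _).1 (by rw [e]; exact hx), e⟩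
  · rintro ⟨p, hp, rfl⟩
    refine ⟨(hmem p).2 hp, ![(p.1 : ℝ), (p.2 : ℝ)], ?_, rfl⟩
    rw [SetLike.mem_coe, Module.Basis.mem_span_iff_repr_mem, Fin.forall_fin_two]
    exact ⟨⟨p.1, by simp⟩, ⟨p.2, by simp⟩⟩

/-- The number of nonzero lattice points in the disk of radius `R` is asymptotic to a positive
multiple of `R ^ 2`. -/
lemma tendsto_card_diskPoints : Tendsto (fun R : ℝ => (Nat.card (diskPoints R) : ℝ) / R ^ 2)
    atTop (nhds (MeasureTheory.volume.real unitDisk)) := by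
  have h := tendsto_card_div_pow_atTop_volume' unitDisk isBounded_unitDisk measurableSet_unitDisk
    (convex_unitDisk.addHaar_frontier _) ?_
  swap
  · rintro x y hx hxy _ ⟨v, hv, rfl⟩
    have hy := hx.trans_le hxy
    refine ⟨(x / y) • v, convex_unitDisk.smul_mem_of_zero_mem (by simp [unitDisk]) hv
      ⟨by positivity, div_le_one_of_le₀ hxy hy.le⟩, ?_⟩
    simp only [smul_smul]
    rw [mul_div_cancel₀ _ hy.ne']
  have h2 : Tendsto (fun R : ℝ => 1 / R ^ 2) atTop (nhds 0) := by
    simpa using tendsto_pow_neg_atTop (𝕜 := ℝ) (two_ne_zero)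
  have h3 := h.sub h2
  rw [sub_zero] at h3
  refine h3.congr' ?_
  filter_upwards [eventually_gt_atTop 0] with R hR
  rw [card_unitDisk_inter hR, Fintype.card_fin]
  push_cast
  ring

/-- Division by `d` identifies the points of the disk of radius `R` with both coordinates
divisible by `d` with the points of the disk of radius `R / d`. -/
lemma card_diskPoints_dvd (R : ℝ) {d : ℕ} (hd : d ≠ 0) :
    Nat.card {p : ℤ × ℤ | p ∈ diskPoints R ∧ d ∣ Int.gcd p.1 p.2} =
      Nat.card (diskPoints (R / d)) := by
  have hdZ : (d : ℤ) ≠ 0 := by exact_mod_cast hd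
  have hdR : (0 : ℝ) < d := by positivity
  let f : ℤ × ℤ → ℤ × ℤ := fun p => (d * p.1, d * p.2)
  have hf : Function.Injective f := by
    rintro ⟨a, b⟩ ⟨a', b'⟩ h
    simpa [f, hdZ, hd] using h
  have hmem : ∀ p, f p ∈ diskPoints R ↔ p ∈ diskPoints (R / d) := by
    rintro ⟨a, b⟩
    simp only [f, diskPoints, Set.mem_ofPred_eq, ne_eq, Prod.mk.injEq, mul_eq_zero, hdZ, false_or]
    rw [div_pow, le_div_iff₀ (by positivity)]
    push_cast
    ring_nf
  rw [← Nat.card_image_of_injective hf (diskPoints (R / d))]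
  congr 2
  ext ⟨a, b⟩
  constructor
  · rintro ⟨hp, h : d ∣ Int.gcd a b⟩
    have h' := Int.natCast_dvd_natCast.2 h
    obtain ⟨a', rfl⟩ := h'.trans (Int.gcd_dvd_left ..)
    obtain ⟨b', rfl⟩ := h'.trans (Int.gcd_dvd_right ..)
    exact ⟨(a', b'), (hmem (a', b')).1 hp, rfl⟩
  · rintro ⟨p, hp, h⟩
    rw [← h]
    exact ⟨(hmem p).2 hp, Int.dvd_gcd (dvd_mul_right _ _) (dvd_mul_right _ _)⟩

open ArithmeticFunction in
/-- The identity `∑_{d ∣ n} μ(d) = [n = 1]` as a series over all `d`, which can be interchanged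
with a finite sum over lattice points. -/
lemma hasSum_moebius_dvd {n : ℕ} (hn : n ≠ 0) :
    HasSum (fun d : ℕ => if d ∣ n then (moebius d : ℝ) else 0) (if n = 1 then 1 else 0) := by
  have h1 : ∑ d ∈ n.divisors, moebius d = if n = 1 then 1 else 0 := by
    rw [← coe_mul_zeta_apply, moebius_mul_coe_zeta, one_apply]
  have h2 : (if n = 1 then (1 : ℝ) else 0) =
      ∑ d ∈ n.divisors, if d ∣ n then (moebius d : ℝ) else 0 := by
    rw [Finset.sum_congr rfl fun d hd => if_pos (Nat.dvd_of_mem_divisors hd)]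
    exact_mod_cast h1.symm
  rw [h2]
  refine hasSum_sum_of_ne_finset_zero fun d hd => if_neg fun h => hd ?_
  exact Nat.mem_divisors.2 ⟨h, hn⟩

/-- Möbius inversion: the number of visible points in a disk in terms of the numbers of all
nonzero points in the smaller disks. The term `d = 0` vanishes since `μ 0 = 0`. -/
lemma hasSum_visible {R : ℝ} (hR : 0 ≤ R) :
    HasSum (fun d : ℕ => (ArithmeticFunction.moebius d : ℝ) * Nat.card (diskPoints (R / d)))
      (Nat.card {p : ℤ × ℤ | p ∈ diskPoints R ∧ Int.gcd p.1 p.2 = 1} : ℝ) := by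
  classical
  obtain ⟨S, hS⟩ := (diskPoints_finite hR).exists_finset_coe
  have hcard : ∀ P : ℤ × ℤ → Prop, (Nat.card {p : ℤ × ℤ | p ∈ diskPoints R ∧ P p} : ℝ) =
      ∑ p ∈ S, if P p then (1 : ℝ) else 0 := by
    intro P
    rw [Finset.sum_boole, ← hS]
    norm_cast
    rw [Nat.card_coe_set_eq, ← Set.ncard_coe_finset]
    congr 1
    ext p
    simp
  have h := hasSum_sum (s := S) (f := fun (p : ℤ × ℤ) (d : ℕ) =>
      if d ∣ Int.gcd p.1 p.2 then (ArithmeticFunction.moebius d : ℝ) else 0)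
      (a := fun p => if Int.gcd p.1 p.2 = 1 then 1 else 0) fun p hp => by
    refine hasSum_moebius_dvd fun h0 => ?_
    have hp' : p ∈ diskPoints R := by rw [← hS]; exact hp
    rw [Int.gcd_eq_zero_iff] at h0
    exact hp'.1 (Prod.ext h0.1 h0.2)
  rw [hcard]
  convert! h using 2 with d p
  swap
  · congr
  rcases eq_or_ne d 0 with rfl | hd
  · simp
  · rw [← card_diskPoints_dvd R hd, hcard, Finset.mul_sum]
    simp

/-- `∑ μ(d) / d ^ 2 = 1 / ζ(2) = 6 / π ^ 2`. -/
lemma tsum_moebius_div_sq :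
    ∑' d : ℕ, (ArithmeticFunction.moebius d : ℝ) / (d : ℝ) ^ 2 = 6 / Real.pi ^ 2 := by
  have h := ArithmeticFunction.LSeries_zeta_mul_Lseries_moebius (s := 2) (by simp)
  rw [ArithmeticFunction.LSeries_zeta_eq_riemannZeta (by simp), riemannZeta_two] at h
  have h2 : LSeries (fun n => ((ArithmeticFunction.moebius n : ℤ) : ℂ)) 2 =
      ((∑' d : ℕ, (ArithmeticFunction.moebius d : ℝ) / (d : ℝ) ^ 2 : ℝ) : ℂ) := by
    rw [LSeries, Complex.ofReal_tsum]
    refine tsum_congr fun d => ?_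
    rcases eq_or_ne d 0 with rfl | hd
    · simp
    · rw [LSeries.term_of_ne_zero hd]
      push_cast
      norm_cast
  rw [h2] at h
  generalize (∑' d : ℕ, (ArithmeticFunction.moebius d : ℝ) / (d : ℝ) ^ 2) = t at h ⊢
  norm_cast at h
  have hpi := Real.pi_pos.ne'
  field_simp at h ⊢
  linarith

/-- The proportion of visible lattice points among all nonzero lattice points in the disk
of radius `Q` tends to `6/π²` as `Q → ∞`. -/
theorem visible_points_proportion :
    Tendsto
      (fun Q : ℝ =>
        (Nat.card {p : ℤ × ℤ | p ≠ (0, 0) ∧ Int.gcd p.1 p.2 = 1 ∧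
            (p.1 : ℝ) ^ 2 + (p.2 : ℝ) ^ 2 ≤ Q ^ 2} : ℝ) /
        (Nat.card {p : ℤ × ℤ | p ≠ (0, 0) ∧
            (p.1 : ℝ) ^ 2 + (p.2 : ℝ) ^ 2 ≤ Q ^ 2} : ℝ))
      atTop (nhds (6 / Real.pi ^ 2)) := by
  set c := MeasureTheory.volume.real unitDisk with hc
  have hc0 : c ≠ 0 := volume_unitDisk_pos.ne'
  have hmu : ∀ d : ℕ, |(ArithmeticFunction.moebius d : ℝ)| ≤ 1 := fun d => by
    exact_mod_cast ArithmeticFunction.abs_moebius_le_one (n := d)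
  have hV : Tendsto (fun Q : ℝ => ∑' d : ℕ, (ArithmeticFunction.moebius d : ℝ) *
      Nat.card (diskPoints (Q / d)) / Q ^ 2) atTop
      (nhds (∑' d : ℕ, c * ((ArithmeticFunction.moebius d : ℝ) / (d : ℝ) ^ 2))) := by
    refine tendsto_tsum_of_dominated_convergence (bound := fun d : ℕ => 9 * (1 / (d : ℝ) ^ 2))
      ((Real.summable_one_div_nat_pow.2 one_lt_two).mul_left 9) (fun d => ?_) ?_
    · rcases eq_or_ne d 0 with rfl | hd
      · simp
      · have hdR : (0 : ℝ) < d := by positivity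
        have h := (tendsto_card_diskPoints.comp (tendsto_id.atTop_div_const hdR)).const_mul
          ((ArithmeticFunction.moebius d : ℝ) / (d : ℝ) ^ 2)
        rw [mul_comm c]
        refine h.congr fun Q => ?_
        simp only [Function.comp_apply, id]
        rw [div_pow]
        field_simp
    · filter_upwards [eventually_gt_atTop 0] with Q hQ d
      rw [norm_div, norm_mul, Real.norm_eq_abs, Real.norm_of_nonneg (by positivity),
        Real.norm_of_nonneg (by positivity), div_le_iff₀ (by positivity)]
      calc _ ≤ 1 * (9 * (Q / d) ^ 2) :=
            mul_le_mul (hmu d) (card_diskPoints_le (by positivity)) (by positivity) zero_le_one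
        _ = _ := by ring
  rw [tsum_mul_left, tsum_moebius_div_sq] at hV
  have h := hV.div tendsto_card_diskPoints hc0
  rw [mul_div_cancel_left₀ _ hc0] at h
  refine h.congr' ?_
  filter_upwards [eventually_gt_atTop 0] with Q hQ
  simp only [Pi.div_apply]
  rw [((hasSum_visible hQ.le).div_const _).tsum_eq, div_div_div_cancel_right₀ (by positivity)]
  congr 4
  ext p
  simp only [diskPoints, Set.mem_ofPred_eq]
  tauto
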